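/- Given an admissible inductive system (E_n, T_n) over C*-algebras (C_n), for every n ≥ 0 the map θ_n : E_n → L = ℓ∞({C_n}) is an ε-morphism with ε = e²·∑_{k>n} ε_k; that is, ‖θ_n(x)‖ ≤ (1 + e²∑_{k>n} ε_k)‖x‖ for all x ∈ E_n, ‖θ_n(xy) − θ_n(x)θ_n(y)‖ ≤ e²(∑_{k>n} ε_k)‖x‖‖y‖ whenever x, y ∈ E_n and xy ∈ E_n, and θ_n(x*) = θ_n(x)* for all x ∈ E_n. -/

import Mathlib

open Filter ENNReal

noncomputable section

variable {C : ℕ → Type*} [∀ n, NonUnitalNormedRing (C n)] [∀ n, StarRing (C n)]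
  [∀ n, CStarRing (C n)] [∀ n, NormedSpace ℂ (C n)] [∀ n, StarModule ℂ (C n)]
  [∀ n, IsScalarTower ℂ (C n) (C n)] [∀ n, SMulCommClass ℂ (C n) (C n)]
  [∀ n, CompleteSpace (C n)]

/-- `ψ : E → D` (with range inside `F ⊆ D`) is an `ε`-morphism: bounded with norm at most
`1 + ε`, approximately multiplicative with defect `ε`, and self-adjoint. -/
def IsEpsMorphism {A D : Type*} [NonUnitalNormedRing A] [StarRing A] [NormedSpace ℂ A]
    [NonUnitalNormedRing D] [StarRing D] [NormedSpace ℂ D]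
    (E : Submodule ℂ A) (F : Submodule ℂ D) (ψ : E →ₗ[ℂ] D) (ε : ℝ) : Prop :=
  (∀ x : E, ψ x ∈ F) ∧
  (∀ x : E, ‖ψ x‖ ≤ (1 + ε) * ‖(x : A)‖) ∧
  (∀ (x y : E) (h : (x : A) * (y : A) ∈ E),
      ‖ψ ⟨(x : A) * (y : A), h⟩ - ψ x * ψ y‖ ≤ ε * ‖(x : A)‖ * ‖(y : A)‖) ∧
  (∀ (x : E) (h : star (x : A) ∈ E), ψ ⟨star (x : A), h⟩ = star (ψ x))

/-- An admissible inductive system: `E n ⊆ C n` are finite-dimensional self-adjoint subspaces,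
`T n : E n → E (n+1)` (the paper's `T_{n+1}`) is an `ε (n+1)`-morphism with
`T n (E n) · T n (E n) ⊆ E (n+1)`, the `ε k` (`k ≥ 1`) are positive with `∑_{k≥1} ε k ≤ 1`. -/
def IsAdmissibleSystem (E : ∀ n, Submodule ℂ (C n)) (T : ∀ n, E n →ₗ[ℂ] E (n + 1))
    (ε : ℕ → ℝ) : Prop :=
  (∀ k, 1 ≤ k → 0 < ε k) ∧
  (∀ N, ∑ k ∈ Finset.Icc 1 N, ε k ≤ 1) ∧
  (∀ n, FiniteDimensional ℂ (E n)) ∧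
  (∀ n, ∀ x ∈ E n, star x ∈ E n) ∧
  (∀ n, IsEpsMorphism (E n) (E (n + 1)) ((E (n + 1)).subtype.comp (T n)) (ε (n + 1))) ∧
  (∀ n, ∀ x y : E n, ((T n x : C (n + 1)) * (T n y : C (n + 1))) ∈ E (n + 1))

/-- The iterated map `Titer E T n x m = T_{[n+m, n+1]}(x) ∈ E (n+m)`
(for `m = 0` this is `x` itself). -/
def Titer (E : ∀ n, Submodule ℂ (C n)) (T : ∀ n, E n →ₗ[ℂ] E (n + 1)) (n : ℕ) (x : E n) :
    ∀ m : ℕ, E (n + m)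
  | 0 => x
  | m + 1 => T (n + m) (Titer E T n x m)

/-- `θₙ(x)`: the sequence `(0, …, 0, x, T_{n+1}x, T_{n+2}T_{n+1}x, …)` (with `x` in
position `n`), as an element of `∀ k, C k`. -/
def theta (E : ∀ n, Submodule ℂ (C n)) (T : ∀ n, E n →ₗ[ℂ] E (n + 1)) (n : ℕ) (x : E n) :
    ∀ k, C k := fun k =>
  if h : n ≤ k then
    cast (congrArg C (Nat.add_sub_cancel' h)) ((Titer E T n x (k - n) : C (n + (k - n))))
  else 0

/-- `Z_n ⊆ L = ℓ∞({C_k})`: the bounded sequences `z` with `z n ∈ E n` and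
`z k = T_{[k,n+1]}(z n)` for all `k > n` (coordinates below `n` are arbitrary). -/
def ZSet (E : ∀ n, Submodule ℂ (C n)) (T : ∀ n, E n →ₗ[ℂ] E (n + 1)) (n : ℕ) :
    Set (lp C ∞) :=
  {z | ∃ h : z n ∈ E n, ∀ k, n ≤ k → z k = theta E T n ⟨z n, h⟩ k}

/-- `Z`: the norm closure of `⋃ n, Z_n` in `L = ℓ∞({C_k})`. -/
def ZAlg (E : ∀ n, Submodule ℂ (C n)) (T : ∀ n, E n →ₗ[ℂ] E (n + 1)) : Set (lp C ∞) :=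
  closure (⋃ n, ZSet E T n)

/-- `c₀({C_k}) ⊆ L`: the sequences whose coordinate norms tend to `0`. -/
def c0Set : Set (lp C ∞) := {z | Tendsto (fun k => ‖z k‖) atTop (nhds 0)}

/-! The iterate `T_[n+m, n+1]` has norm at most `P = ∏ (1 + ε_k)`, the product over
`n < k ≤ n + m`. Its multiplicative defect is at most `P (P - 1)`: applying one more
`ε`-morphism to a map with norm `P` and defect `P (P - 1)` gives the defect
`(1 + ε) P (P - 1) + ε P²`, which is at most `P (1 + ε) (P (1 + ε) - 1)`. With `S = ∑ ε_k`,
the estimates `P ≤ exp S` and `exp S - 1 ≤ S exp S` yield `P (P - 1) ≤ exp (2 S) S`, and this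
also controls the norm because `P ≤ 1 + P (P - 1)`. -/

section RealEstimates

theorem exp_sub_one_le_mul_exp (x : ℝ) : Real.exp x - 1 ≤ x * Real.exp x := by
  have h : (1 - x) * Real.exp x ≤ Real.exp (-x) * Real.exp x :=
    mul_le_mul_of_nonneg_right (Real.one_sub_le_exp_neg x) (Real.exp_pos x).le
  rw [← Real.exp_add, neg_add_cancel, Real.exp_zero] at h
  linarith

theorem prod_one_add_mul_sub_one_le {ι : Type*} (t : Finset ι) {δ : ι → ℝ}
    (hδ : ∀ i, 0 ≤ δ i) :
    (∏ i ∈ t, (1 + δ i)) * (∏ i ∈ t, (1 + δ i) - 1) ≤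
      Real.exp (2 * ∑ i ∈ t, δ i) * ∑ i ∈ t, δ i := by
  have hS : 0 ≤ ∑ i ∈ t, δ i := Finset.sum_nonneg fun i _ => hδ i
  have hP : 0 ≤ ∏ i ∈ t, (1 + δ i) := Finset.prod_nonneg fun i _ => add_nonneg zero_le_one (hδ i)
  have hexp : ∏ i ∈ t, (1 + δ i) ≤ Real.exp (∑ i ∈ t, δ i) :=
    Real.prod_one_add_le_exp_sum t hδ
  set P := ∏ i ∈ t, (1 + δ i)
  set S := ∑ i ∈ t, δ i
  calc P * (P - 1) ≤ P * (S * Real.exp S) := by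
        gcongr
        linarith [exp_sub_one_le_mul_exp S]
    _ ≤ Real.exp S * (S * Real.exp S) := by gcongr
    _ = Real.exp (2 * S) * S := by rw [two_mul, Real.exp_add]; ring

theorem prod_range_one_add_mul_sub_one_le_tsum {δ : ℕ → ℝ} {s : ℝ} (hδ : ∀ j, 0 ≤ δ j)
    (hs : ∀ m, ∑ j ∈ Finset.range m, δ j ≤ s) (m : ℕ) :
    (∏ j ∈ Finset.range m, (1 + δ j)) * (∏ j ∈ Finset.range m, (1 + δ j) - 1) ≤
      Real.exp (2 * s) * ∑' j, δ j := by
  refine (prod_one_add_mul_sub_one_le _ hδ).trans ?_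
  gcongr
  · exact Finset.sum_nonneg fun j _ => hδ j
  · exact hs m
  · exact (summable_of_sum_range_le hδ hs).sum_le_tsum _ fun j _ => hδ j

theorem sum_range_tail_le_of_sum_Icc_le {ε : ℕ → ℝ} {s : ℝ} (hε : ∀ k, 1 ≤ k → 0 ≤ ε k)
    (hs : ∀ N, ∑ k ∈ Finset.Icc 1 N, ε k ≤ s) (n m : ℕ) :
    ∑ j ∈ Finset.range m, ε (n + 1 + j) ≤ s := by
  have hshift : ∑ j ∈ Finset.range m, ε (n + 1 + j) =
      ∑ k ∈ Finset.Ico (n + 1) (n + 1 + m), ε k := by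
    rw [Finset.sum_Ico_eq_sum_range, Nat.add_sub_cancel_left]
  rw [hshift]
  refine le_trans (Finset.sum_le_sum_of_subset_of_nonneg ?_ fun k hk _ => ?_) (hs (n + m))
  · intro k hk
    simp only [Finset.mem_Ico, Finset.mem_Icc] at hk ⊢
    omega
  · exact hε k (Finset.mem_Icc.mp hk).1

end RealEstimates

namespace IsEpsMorphism

variable {A D : Type*} [NonUnitalNormedRing A] [StarRing A] [NormedSpace ℂ A]
  [NonUnitalNormedRing D] [StarRing D] [NormedSpace ℂ D]
  {E : Submodule ℂ A} {F : Submodule ℂ D} {ψ : E →ₗ[ℂ] D} {ε : ℝ}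

theorem norm_apply_le (hψ : IsEpsMorphism E F ψ ε) (x : E) :
    ‖ψ x‖ ≤ (1 + ε) * ‖(x : A)‖ :=
  hψ.2.1 x

theorem norm_apply_mul_sub_le (hψ : IsEpsMorphism E F ψ ε) (x y : E)
    (h : (x : A) * (y : A) ∈ E) :
    ‖ψ ⟨(x : A) * (y : A), h⟩ - ψ x * ψ y‖ ≤ ε * ‖(x : A)‖ * ‖(y : A)‖ :=
  hψ.2.2.1 x y h

theorem apply_star (hψ : IsEpsMorphism E F ψ ε) (x : E) (h : star (x : A) ∈ E) :
    ψ ⟨star (x : A), h⟩ = star (ψ x) :=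
  hψ.2.2.2 x h

theorem norm_apply_sub_mul_le (hψ : IsEpsMorphism E F ψ ε) (z x y : E)
    (h : (x : A) * (y : A) ∈ E) :
    ‖ψ z - ψ x * ψ y‖ ≤
      (1 + ε) * ‖(z : A) - (x : A) * (y : A)‖ + ε * ‖(x : A)‖ * ‖(y : A)‖ :=
  calc ‖ψ z - ψ x * ψ y‖
      = ‖ψ (z - ⟨(x : A) * (y : A), h⟩) + (ψ ⟨(x : A) * (y : A), h⟩ - ψ x * ψ y)‖ := by
        rw [map_sub, sub_add_sub_cancel]
    _ ≤ ‖ψ (z - ⟨(x : A) * (y : A), h⟩)‖ + ‖ψ ⟨(x : A) * (y : A), h⟩ - ψ x * ψ y‖ :=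
        norm_add_le _ _
    _ ≤ _ := add_le_add (hψ.norm_apply_le _) (hψ.norm_apply_mul_sub_le x y h)

end IsEpsMorphism

section InductiveSystem

variable {B : ℕ → Type*} [∀ n, NonUnitalNormedRing (B n)] [∀ n, NormedSpace ℂ (B n)]
  {E : ∀ n, Submodule ℂ (B n)} {T : ∀ n, E n →ₗ[ℂ] E (n + 1)} {ε : ℕ → ℝ}

theorem theta_apply_add (n m : ℕ) (x : E n) :
    theta E T n x (n + m) = (Titer E T n x m : B (n + m)) := by
  have hcast : ∀ (j : ℕ) (_ : j = m) (h : B (n + j) = B (n + m)),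
      cast h (Titer E T n x j : B (n + j)) = (Titer E T n x m : B (n + m)) := by
    rintro j rfl h
    rfl
  rw [theta, dif_pos (Nat.le_add_right n m)]
  exact hcast _ (Nat.add_sub_cancel_left n m) _

theorem theta_apply_of_lt {n k : ℕ} (hk : k < n) (x : E n) : theta E T n x k = 0 :=
  dif_neg hk.not_ge

theorem Titer_mul_mem
    (hmul : ∀ n, ∀ x y : E n, (T n x : B (n + 1)) * (T n y : B (n + 1)) ∈ E (n + 1))
    (n m : ℕ) (x y : E n) (h : (x : B n) * (y : B n) ∈ E n) :
    (Titer E T n x m : B (n + m)) * (Titer E T n y m : B (n + m)) ∈ E (n + m) := by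
  cases m with
  | zero => exact h
  | succ m => exact hmul (n + m) _ _

variable [∀ n, StarRing (B n)]

theorem norm_Titer_le (hε : ∀ k, 1 ≤ k → 0 ≤ ε k)
    (hT : ∀ n, IsEpsMorphism (E n) (E (n + 1)) ((E (n + 1)).subtype.comp (T n)) (ε (n + 1)))
    (n m : ℕ) (x : E n) :
    ‖(Titer E T n x m : B (n + m))‖ ≤
      (∏ j ∈ Finset.range m, (1 + ε (n + 1 + j))) * ‖(x : B n)‖ := by
  induction m with
  | zero => simp [Titer]
  | succ m ih =>
    have he : 0 ≤ ε (n + m + 1) := hε _ (Nat.le_add_left 1 _)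
    calc ‖(Titer E T n x (m + 1) : B (n + (m + 1)))‖
        ≤ (1 + ε (n + m + 1)) * ‖(Titer E T n x m : B (n + m))‖ := (hT _).norm_apply_le _
      _ ≤ (1 + ε (n + m + 1)) *
          ((∏ j ∈ Finset.range m, (1 + ε (n + 1 + j))) * ‖(x : B n)‖) := by gcongr
      _ = _ := by rw [Finset.prod_range_succ, Nat.add_right_comm n m 1]; ring

theorem norm_Titer_mul_sub_le (hε : ∀ k, 1 ≤ k → 0 ≤ ε k)
    (hT : ∀ n, IsEpsMorphism (E n) (E (n + 1)) ((E (n + 1)).subtype.comp (T n)) (ε (n + 1)))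
    (hmul : ∀ n, ∀ x y : E n, (T n x : B (n + 1)) * (T n y : B (n + 1)) ∈ E (n + 1))
    (n m : ℕ) (x y : E n) (h : (x : B n) * (y : B n) ∈ E n) :
    ‖(Titer E T n ⟨(x : B n) * (y : B n), h⟩ m : B (n + m)) -
        (Titer E T n x m : B (n + m)) * (Titer E T n y m : B (n + m))‖ ≤
      (∏ j ∈ Finset.range m, (1 + ε (n + 1 + j))) *
        (∏ j ∈ Finset.range m, (1 + ε (n + 1 + j)) - 1) * (‖(x : B n)‖ * ‖(y : B n)‖) := by
  induction m with
  | zero => simp [Titer]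
  | succ m ih =>
    have he : 0 ≤ ε (n + m + 1) := hε _ (Nat.le_add_left 1 _)
    have hx := norm_Titer_le hε hT n m x
    have hy := norm_Titer_le hε hT n m y
    have hstep := (hT (n + m)).norm_apply_sub_mul_le (Titer E T n ⟨(x : B n) * (y : B n), h⟩ m)
      (Titer E T n x m) (Titer E T n y m) (Titer_mul_mem hmul n m x y h)
    rw [Finset.prod_range_succ, Nat.add_right_comm n 1 m]
    set P := ∏ j ∈ Finset.range m, (1 + ε (n + 1 + j))
    set e := ε (n + m + 1)
    have hPx : 0 ≤ P * ‖(x : B n)‖ := (norm_nonneg _).trans hx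
    calc _ ≤ _ := hstep
      _ ≤ (1 + e) * (P * (P - 1) * (‖(x : B n)‖ * ‖(y : B n)‖)) +
          e * (P * ‖(x : B n)‖) * (P * ‖(y : B n)‖) := by gcongr
      _ = P * (1 + e) * (P * (1 + e) - 1) * (‖(x : B n)‖ * ‖(y : B n)‖) -
          (e * P) ^ 2 * (‖(x : B n)‖ * ‖(y : B n)‖) := by ring
      _ ≤ P * (1 + e) * (P * (1 + e) - 1) * (‖(x : B n)‖ * ‖(y : B n)‖) :=
        sub_le_self _ (by positivity)

theorem Titer_star
    (hT : ∀ n, IsEpsMorphism (E n) (E (n + 1)) ((E (n + 1)).subtype.comp (T n)) (ε (n + 1)))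
    (n m : ℕ) (x : E n) (h : star (x : B n) ∈ E n) :
    (Titer E T n ⟨star (x : B n), h⟩ m : B (n + m)) = star (Titer E T n x m : B (n + m)) := by
  induction m with
  | zero => rfl
  | succ m ih =>
    have hmem : star (Titer E T n x m : B (n + m)) ∈ E (n + m) := ih ▸ Subtype.coe_prop _
    have hstar : Titer E T n ⟨star (x : B n), h⟩ m = ⟨star (Titer E T n x m : B (n + m)), hmem⟩ :=
      Subtype.ext ih
    rw [Titer, hstar]
    exact (hT (n + m)).apply_star _ hmem

theorem norm_theta_apply_le (hε : ∀ k, 1 ≤ k → 0 ≤ ε k)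
    (hT : ∀ n, IsEpsMorphism (E n) (E (n + 1)) ((E (n + 1)).subtype.comp (T n)) (ε (n + 1)))
    {s : ℝ} (hs : ∀ N, ∑ k ∈ Finset.Icc 1 N, ε k ≤ s) (n : ℕ) (x : E n) (k : ℕ) :
    ‖theta E T n x k‖ ≤ (1 + Real.exp (2 * s) * ∑' j : ℕ, ε (n + 1 + j)) * ‖(x : B n)‖ := by
  have hδ (j : ℕ) : 0 ≤ ε (n + 1 + j) := hε _ (by omega)
  rcases lt_or_ge k n with hk | hk
  · have hsum : 0 ≤ ∑' j : ℕ, ε (n + 1 + j) := tsum_nonneg hδ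
    rw [theta_apply_of_lt hk, norm_zero]
    positivity
  · obtain ⟨m, rfl⟩ := Nat.exists_eq_add_of_le hk
    have hP := prod_range_one_add_mul_sub_one_le_tsum hδ
      (sum_range_tail_le_of_sum_Icc_le hε hs n) m
    rw [theta_apply_add]
    refine (norm_Titer_le hε hT n m x).trans ?_
    gcongr
    linarith [sq_nonneg (∏ j ∈ Finset.range m, (1 + ε (n + 1 + j)) - 1)]

theorem norm_theta_apply_mul_sub_le (hε : ∀ k, 1 ≤ k → 0 ≤ ε k)
    (hT : ∀ n, IsEpsMorphism (E n) (E (n + 1)) ((E (n + 1)).subtype.comp (T n)) (ε (n + 1)))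
    (hmul : ∀ n, ∀ x y : E n, (T n x : B (n + 1)) * (T n y : B (n + 1)) ∈ E (n + 1))
    {s : ℝ} (hs : ∀ N, ∑ k ∈ Finset.Icc 1 N, ε k ≤ s) (n : ℕ) (x y : E n)
    (h : (x : B n) * (y : B n) ∈ E n) (k : ℕ) :
    ‖theta E T n ⟨(x : B n) * (y : B n), h⟩ k - theta E T n x k * theta E T n y k‖ ≤
      (Real.exp (2 * s) * ∑' j : ℕ, ε (n + 1 + j)) * ‖(x : B n)‖ * ‖(y : B n)‖ := by
  have hδ (j : ℕ) : 0 ≤ ε (n + 1 + j) := hε _ (by omega)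
  rcases lt_or_ge k n with hk | hk
  · have hsum : 0 ≤ ∑' j : ℕ, ε (n + 1 + j) := tsum_nonneg hδ
    simp only [theta_apply_of_lt hk, mul_zero, sub_zero, norm_zero]
    positivity
  · obtain ⟨m, rfl⟩ := Nat.exists_eq_add_of_le hk
    simp only [theta_apply_add]
    refine (norm_Titer_mul_sub_le hε hT hmul n m x y h).trans ?_
    rw [mul_assoc _ ‖(x : B n)‖]
    gcongr ?_ * _
    exact prod_range_one_add_mul_sub_one_le_tsum hδ (sum_range_tail_le_of_sum_Icc_le hε hs n) m

theorem theta_star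
    (hT : ∀ n, IsEpsMorphism (E n) (E (n + 1)) ((E (n + 1)).subtype.comp (T n)) (ε (n + 1)))
    (n : ℕ) (x : E n) (h : star (x : B n) ∈ E n) :
    theta E T n ⟨star (x : B n), h⟩ = fun k => star (theta E T n x k) := by
  funext k
  rcases lt_or_ge k n with hk | hk
  · simp only [theta_apply_of_lt hk, star_zero]
  · obtain ⟨m, rfl⟩ := Nat.exists_eq_add_of_le hk
    simp only [theta_apply_add]
    exact Titer_star hT n m x h

theorem theta_isEpsMorphism_general (hε : ∀ k, 1 ≤ k → 0 ≤ ε k) {s : ℝ}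
    (hs : ∀ N, ∑ k ∈ Finset.Icc 1 N, ε k ≤ s)
    (hT : ∀ n, IsEpsMorphism (E n) (E (n + 1)) ((E (n + 1)).subtype.comp (T n)) (ε (n + 1)))
    (hmul : ∀ n, ∀ x y : E n, (T n x : B (n + 1)) * (T n y : B (n + 1)) ∈ E (n + 1)) (n : ℕ) :
    (∀ x : E n, Memℓp (theta E T n x) ∞) ∧
    (∀ (x : E n) (hm : Memℓp (theta E T n x) ∞),
        ‖(⟨theta E T n x, hm⟩ : lp B ∞)‖ ≤
          (1 + Real.exp (2 * s) * ∑' j : ℕ, ε (n + 1 + j)) * ‖(x : B n)‖) ∧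
    (∀ (x y : E n) (h : (x : B n) * (y : B n) ∈ E n)
        (hm₁ : Memℓp (theta E T n ⟨(x : B n) * (y : B n), h⟩) ∞)
        (hm₂ : Memℓp (theta E T n x) ∞) (hm₃ : Memℓp (theta E T n y) ∞),
        ‖(⟨theta E T n ⟨(x : B n) * (y : B n), h⟩, hm₁⟩ : lp B ∞) -
            (⟨theta E T n x, hm₂⟩ : lp B ∞) * (⟨theta E T n y, hm₃⟩ : lp B ∞)‖ ≤
          (Real.exp (2 * s) * ∑' j : ℕ, ε (n + 1 + j)) * ‖(x : B n)‖ * ‖(y : B n)‖) ∧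
    (∀ (x : E n) (h : star (x : B n) ∈ E n),
        theta E T n ⟨star (x : B n), h⟩ = fun k => star (theta E T n x k)) := by
  have hnorm := norm_theta_apply_le hε hT hs n
  have hdefect := norm_theta_apply_mul_sub_le hε hT hmul hs n
  exact ⟨fun x => memℓp_infty ⟨_, Set.forall_mem_range.mpr (hnorm x)⟩,
    fun x _ => lp.norm_le_of_forall_le ((norm_nonneg _).trans (hnorm x 0)) (hnorm x),
    fun x y h _ _ _ =>
      lp.norm_le_of_forall_le ((norm_nonneg _).trans (hdefect x y h 0)) (hdefect x y h),
    theta_star hT n⟩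

end InductiveSystem

/-- For an admissible inductive system, `θ_n : E_n → L = ℓ∞({C_k})` is an
`ε`-morphism with `ε = e² ∑_{k>n} ε_k`: it satisfies the norm bound
`‖θ_n(x)‖ ≤ (1 + e² ∑_{k>n} ε_k) ‖x‖`, the approximate multiplicativity bound
`‖θ_n(xy) − θ_n(x) θ_n(y)‖ ≤ e² (∑_{k>n} ε_k) ‖x‖ ‖y‖` (whenever `x, y, xy ∈ E_n`),
and it is self-adjoint.  (The hypotheses `Memℓp … ∞`, i.e. boundedness of the relevant
sequences, are automatically satisfied; they are needed to regard them as elements of `L`.) -/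
theorem theta_isEpsMorphism (E : ∀ n, Submodule ℂ (C n)) (T : ∀ n, E n →ₗ[ℂ] E (n + 1))
    (ε : ℕ → ℝ) (hsys : IsAdmissibleSystem E T ε) (n : ℕ) :
    (∀ (x : E n) (hm : Memℓp (theta E T n x) ∞),
        ‖(⟨theta E T n x, hm⟩ : lp C ∞)‖ ≤
          (1 + Real.exp 2 * ∑' j : ℕ, ε (n + 1 + j)) * ‖(x : C n)‖) ∧
    (∀ (x y : E n) (h : (x : C n) * (y : C n) ∈ E n)
        (hm₁ : Memℓp (theta E T n ⟨(x : C n) * (y : C n), h⟩) ∞)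
        (hm₂ : Memℓp (theta E T n x) ∞) (hm₃ : Memℓp (theta E T n y) ∞),
        ‖(⟨theta E T n ⟨(x : C n) * (y : C n), h⟩, hm₁⟩ : lp C ∞) -
            (⟨theta E T n x, hm₂⟩ : lp C ∞) * (⟨theta E T n y, hm₃⟩ : lp C ∞)‖ ≤
          (Real.exp 2 * ∑' j : ℕ, ε (n + 1 + j)) * ‖(x : C n)‖ * ‖(y : C n)‖) ∧
    (∀ (x : E n) (h : star (x : C n) ∈ E n),
        theta E T n ⟨star (x : C n), h⟩ = fun k => star (theta E T n x k)) := by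
  simpa only [mul_one] using (theta_isEpsMorphism_general (fun k hk => (hsys.1 k hk).le)
    hsys.2.1 hsys.2.2.2.2.1 hsys.2.2.2.2.2 n).2
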